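/- Let F = (F_1, …, F_V) be a probability vector with F_j > 0 for all j, and for ϖ > 0 let x_ϖ = (x_1, …, x_V) be a PPU(ϖ, F) random vector. Then as ϖ → ∞: (i) E(x_i) → F_i for every i; (ii) ϖ · Var(x_i) → F_i(1 − F_i) for every i; and (iii) ϖ · Cov(x_i, x_j) → −F_i F_j for every i ≠ j. Equivalently, |E(x_i) − F_i| → 0, |Var(x_i) − F_i(1 − F_i)/ϖ| = o(1/ϖ), and |Cov(x_i, x_j) + F_i F_j/ϖ| = o(1/ϖ). -/

import Mathlib

/-!
Conditionally on the total count `S`, independent Poisson counts are multinomial, so the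
proportions have mean exactly `F` and covariances `F i * (δ i j - F j) * E[1 / S | 0 < S]`. Since
`S` is Poisson with mean `ϖ`, everything reduces to `ϖ * E[1 / S; 0 < S] → 1`. Conditioning on `S`
is replaced by the identity `E[γ i * g γ] = m i * E[g (γ + e i)]`, which characterizes the Poisson
law and holds without any integrability assumption on `g`.
-/

open MeasureTheory ProbabilityTheory Filter Real

/-- The Poisson Pólya urn law `PPU(ϖ, F)` on `ℝ^V`: the law of the normalized vector of
independent Poisson counts with means `ϖ * F j`, conditional on the total count being positive. -/
noncomputable def ppu (V : ℕ) (ϖ : ℝ) (F : Fin V → ℝ) : Measure (Fin V → ℝ) :=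
  Measure.map (fun γ : Fin V → ℕ => fun i => (γ i : ℝ) / ((∑ j, γ j : ℕ) : ℝ))
    ((Measure.pi fun j => poissonMeasure (ϖ * F j).toNNReal)[|{γ | 0 < ∑ j, γ j}])

open scoped NNReal ENNReal Topology

section DiscreteMeasure

variable {α : Type*} [MeasurableSpace α] [MeasurableSingletonClass α] [Countable α]

lemma integral_smul_eq_smul_integral_comp_of_injective
    {E : Type*} [NormedAddCommGroup E] [NormedSpace ℝ E] {μ : Measure α} {T : α → α}
    (hT : Function.Injective T) {w : α → ℝ≥0} {c : ℝ≥0} (hw : ∀ a ∉ Set.range T, w a = 0)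
    (hμ : ∀ a, (w (T a) : ℝ≥0∞) * μ {T a} = c * μ {a}) (g : α → E) :
    ∫ a, w a • g a ∂μ = c • ∫ a, g (T a) ∂μ := by
  have hmeasure : μ.withDensity (fun a => (w a : ℝ≥0∞)) = c • μ.map T := by
    refine Measure.ext_of_singleton fun b => ?_
    rw [withDensity_apply _ (measurableSet_singleton b), lintegral_singleton, Measure.smul_apply,
      Measure.map_apply .of_discrete (measurableSet_singleton b)]
    by_cases hb : b ∈ Set.range T
    · obtain ⟨a, rfl⟩ := hb
      rw [← Set.image_singleton, hT.preimage_image, Set.image_singleton, hμ a, ENNReal.smul_def,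
        smul_eq_mul]
    · rw [hw b hb, Set.preimage_singleton_eq_empty.mpr hb]
      simp
  rw [← integral_withDensity_eq_integral_smul .of_discrete, hmeasure,
    integral_smul_nnreal_measure, integral_map .of_discrete .of_discrete]

lemma integrable_of_countable_of_bound {E : Type*} [NormedAddCommGroup E] {μ : Measure α}
    [IsFiniteMeasure μ] {f : α → E} {C : ℝ} (hf : ∀ a, ‖f a‖ ≤ C) : Integrable f μ :=
  .of_bound .of_discrete C (.of_forall hf)

end DiscreteMeasure

section Poisson

variable (r : ℝ≥0)

lemma natCast_succ_mul_poissonMeasure_singleton (n : ℕ) :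
    ((n + 1 : ℕ) : ℝ≥0∞) * poissonMeasure r {n + 1} = r * poissonMeasure r {n} := by
  rw [poissonMeasure_singleton, poissonMeasure_singleton, ← ENNReal.ofReal_natCast,
    ← ENNReal.ofReal_coe_nnreal, ← ENNReal.ofReal_mul (by positivity),
    ← ENNReal.ofReal_mul (by positivity), Nat.factorial_succ]
  congr 1
  push_cast
  field_simp
  ring

lemma integral_natCast_mul_poissonMeasure (f : ℕ → ℝ) :
    ∫ n, (n : ℝ) * f n ∂(poissonMeasure r) = r * ∫ n, f (n + 1) ∂(poissonMeasure r) := by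
  have h := integral_smul_eq_smul_integral_comp_of_injective (μ := poissonMeasure r)
    (T := (· + 1)) (w := fun n => (n : ℝ≥0)) (add_left_injective 1)
    (fun n hn => by
      rw [Nat.cast_eq_zero]
      by_contra h0
      exact hn ⟨n - 1, Nat.sub_one_add_one h0⟩)
    (fun n => mod_cast natCast_succ_mul_poissonMeasure_singleton r n) f
  simpa only [NNReal.smul_def, smul_eq_mul, NNReal.coe_natCast] using h

lemma integral_natCast_mul_sub_one_mul_poissonMeasure (f : ℕ → ℝ) :
    ∫ n, (n : ℝ) * (((n : ℝ) - 1) * f n) ∂(poissonMeasure r)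
      = r ^ 2 * ∫ n, f (n + 2) ∂(poissonMeasure r) := by
  rw [integral_natCast_mul_poissonMeasure r fun n => ((n : ℝ) - 1) * f n]
  simp only [Nat.cast_add_one, add_sub_cancel_right]
  rw [integral_natCast_mul_poissonMeasure r fun n => f (n + 1), ← mul_assoc, ← sq]

lemma poissonMeasure_real_setOf_pos :
    (poissonMeasure r).real {n | 0 < n} = 1 - exp (-r) := by
  have hcompl : {n : ℕ | 0 < n} = {0}ᶜ := by
    ext n
    simp [Nat.pos_iff_ne_zero]
  rw [hcompl, probReal_compl_eq_one_sub .of_discrete, poissonMeasure_real_singleton]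
  simp

lemma integral_natCast_mul_inv_poissonMeasure :
    ∫ n : ℕ, (n : ℝ) * (n : ℝ)⁻¹ ∂(poissonMeasure r) = 1 - exp (-r) := by
  have hindicator : (fun n : ℕ => (n : ℝ) * (n : ℝ)⁻¹) = {n | 0 < n}.indicator 1 := by
    ext n
    rcases Nat.eq_zero_or_pos n with rfl | hn
    · simp
    · simp [hn, hn.ne']
  rw [hindicator, integral_indicator_one .of_discrete, poissonMeasure_real_setOf_pos]

lemma integrable_inv_natCast_poissonMeasure :
    Integrable (fun n : ℕ => (n : ℝ)⁻¹) (poissonMeasure r) :=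
  integrable_of_countable_of_bound (C := 1) fun n => by
    simpa only [norm_inv, norm_natCast] using Nat.cast_inv_le_one n

lemma mul_integral_inv_add_one_poissonMeasure :
    r * ∫ n : ℕ, ((n : ℝ) + 1)⁻¹ ∂(poissonMeasure r) = 1 - exp (-r) := by
  rw [← integral_natCast_mul_inv_poissonMeasure, integral_natCast_mul_poissonMeasure]
  simp only [Nat.cast_add_one]

lemma mul_integral_inv_sq_add_one_poissonMeasure :
    r * ∫ n : ℕ, (((n + 1 : ℕ) : ℝ) ^ 2)⁻¹ ∂(poissonMeasure r)
      = ∫ n : ℕ, (n : ℝ)⁻¹ ∂(poissonMeasure r) := by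
  rw [← integral_natCast_mul_poissonMeasure r fun n => ((n : ℝ) ^ 2)⁻¹]
  congr 1 with n
  rcases eq_or_ne (n : ℝ) 0 with h | h
  · simp [h]
  · field_simp

lemma sq_mul_integral_inv_sq_add_two_poissonMeasure :
    r ^ 2 * ∫ n : ℕ, (((n + 2 : ℕ) : ℝ) ^ 2)⁻¹ ∂(poissonMeasure r)
      = 1 - exp (-r) - ∫ n : ℕ, (n : ℝ)⁻¹ ∂(poissonMeasure r) := by
  have hint_mul_inv : Integrable (fun n : ℕ => (n : ℝ) * (n : ℝ)⁻¹) (poissonMeasure r) :=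
    integrable_of_countable_of_bound (C := 1) fun n => by
      rw [norm_of_nonneg (by positivity)]
      exact mul_inv_le_one
  rw [← integral_natCast_mul_sub_one_mul_poissonMeasure r fun n => ((n : ℝ) ^ 2)⁻¹,
    ← integral_natCast_mul_inv_poissonMeasure,
    ← integral_sub hint_mul_inv (integrable_inv_natCast_poissonMeasure r)]
  congr 1 with n
  rcases eq_or_ne (n : ℝ) 0 with h | h
  · simp [h]
  · field_simp

lemma sq_mul_integral_inv_mul_inv_poissonMeasure_le_one :
    r ^ 2 * ∫ n : ℕ, (((n : ℝ) + 1) * (n + 2))⁻¹ ∂(poissonMeasure r) ≤ 1 := by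
  have hshift : r ^ 2 * ∫ n : ℕ, (((n : ℝ) + 1) * (n + 2))⁻¹ ∂(poissonMeasure r)
      = ∫ n : ℕ, (n : ℝ) * (((n : ℝ) - 1) * ((n : ℝ) * (n - 1))⁻¹) ∂(poissonMeasure r) := by
    rw [integral_natCast_mul_sub_one_mul_poissonMeasure r fun n => ((n : ℝ) * (n - 1))⁻¹]
    congr 3 with n
    push_cast
    ring
  have hle (n : ℕ) : ‖(n : ℝ) * (((n : ℝ) - 1) * ((n : ℝ) * (n - 1))⁻¹)‖ ≤ 1 := by
    rw [← mul_assoc]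
    rcases eq_or_ne ((n : ℝ) * (n - 1)) 0 with h | h
    · simp [h]
    · rw [mul_inv_cancel₀ h, norm_one]
  rw [hshift]
  exact (le_abs_self _).trans <|
    (norm_integral_le_of_norm_le_const (.of_forall hle)).trans_eq (by simp)

lemma abs_inv_natCast_sub_inv_add_one_le (n : ℕ) :
    |(n : ℝ)⁻¹ - ((n : ℝ) + 1)⁻¹| ≤ 3 * (((n : ℝ) + 1) * (n + 2))⁻¹ := by
  rcases Nat.eq_zero_or_pos n with rfl | hn
  · norm_num
  · have h1 : (1 : ℝ) ≤ n := mod_cast hn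
    have hdiff : (n : ℝ)⁻¹ - ((n : ℝ) + 1)⁻¹ = (n * ((n : ℝ) + 1))⁻¹ := by
      field_simp
      ring
    rw [hdiff, abs_of_nonneg (by positivity), ← div_eq_mul_inv, inv_eq_one_div,
      div_le_div_iff₀ (by positivity) (by positivity)]
    nlinarith

variable {r} in
lemma abs_mul_integral_inv_poissonMeasure_sub_le (hr : 0 < r) :
    |r * ∫ n : ℕ, (n : ℝ)⁻¹ ∂(poissonMeasure r) - (1 - exp (-r))| ≤ 3 / r := by
  have hint_inv_add_one : Integrable (fun n : ℕ => ((n : ℝ) + 1)⁻¹) (poissonMeasure r) :=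
    integrable_of_countable_of_bound (C := 1) fun n => by
      simpa [abs_of_nonneg, add_nonneg] using Nat.cast_inv_le_one (α := ℝ) (n + 1)
  have hint_inv_mul : Integrable (fun n : ℕ => 3 * (((n : ℝ) + 1) * (n + 2))⁻¹)
      (poissonMeasure r) :=
    .const_mul (integrable_of_countable_of_bound (C := 1) fun n => by
      rw [norm_of_nonneg (by positivity)]
      exact inv_le_one_of_one_le₀ (by nlinarith [n.cast_nonneg (α := ℝ)])) 3
  calc |r * ∫ n : ℕ, (n : ℝ)⁻¹ ∂(poissonMeasure r) - (1 - exp (-r))|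
      = r * |∫ n : ℕ, ((n : ℝ)⁻¹ - ((n : ℝ) + 1)⁻¹) ∂(poissonMeasure r)| := by
        rw [← mul_integral_inv_add_one_poissonMeasure, ← mul_sub,
          ← integral_sub (integrable_inv_natCast_poissonMeasure r) hint_inv_add_one, abs_mul,
          NNReal.abs_eq]
    _ ≤ r * ∫ n : ℕ, 3 * (((n : ℝ) + 1) * (n + 2))⁻¹ ∂(poissonMeasure r) := by
        gcongr
        exact norm_integral_le_of_norm_le (f := fun n : ℕ => (n : ℝ)⁻¹ - ((n : ℝ) + 1)⁻¹)
          hint_inv_mul (.of_forall abs_inv_natCast_sub_inv_add_one_le)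
    _ = 3 / r * (r ^ 2 * ∫ n : ℕ, (((n : ℝ) + 1) * (n + 2))⁻¹ ∂(poissonMeasure r)) := by
        rw [integral_const_mul]
        field_simp
    _ ≤ 3 / r :=
        mul_le_of_le_one_right (by positivity)
          (sq_mul_integral_inv_mul_inv_poissonMeasure_le_one r)

lemma one_sub_exp_neg_ne_zero {x : ℝ} (hx : 0 < x) : 1 - exp (-x) ≠ 0 :=
  sub_ne_zero.mpr (exp_lt_one_iff.mpr (neg_neg_of_pos hx)).ne'

lemma tendsto_one_sub_exp_neg_atTop : Tendsto (fun x : ℝ => 1 - exp (-x)) atTop (𝓝 1) := by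
  simpa using tendsto_exp_neg_atTop_nhds_zero.const_sub 1

lemma tendsto_mul_integral_inv_poissonMeasure :
    Tendsto (fun r : ℝ≥0 => r * ∫ n : ℕ, (n : ℝ)⁻¹ ∂(poissonMeasure r)) atTop (𝓝 1) := by
  have hcoe : Tendsto ((↑) : ℝ≥0 → ℝ) atTop atTop := NNReal.tendsto_coe_atTop.mpr tendsto_id
  have hdiff : Tendsto (fun r : ℝ≥0 => r * ∫ n : ℕ, (n : ℝ)⁻¹ ∂(poissonMeasure r)
      - (1 - exp (-r))) atTop (𝓝 0) :=
    squeeze_zero_norm' ((eventually_gt_atTop 0).mono fun _ =>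
      abs_mul_integral_inv_poissonMeasure_sub_le) (tendsto_const_nhds.div_atTop hcoe)
  simpa using hdiff.add (tendsto_one_sub_exp_neg_atTop.comp hcoe)

lemma hasLaw_sum_poissonMeasure {Ω ι : Type*} {mΩ : MeasurableSpace Ω} {P : Measure Ω}
    {X : ι → Ω → ℕ} {m : ι → ℝ≥0} (hindep : iIndepFun X P)
    (hX : ∀ i, HasLaw (X i) (poissonMeasure (m i)) P) (s : Finset ι) :
    HasLaw (∑ i ∈ s, X i) (poissonMeasure (∑ i ∈ s, m i)) P := by
  classical
  have := hindep.isProbabilityMeasure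
  induction s using Finset.induction_on with
  | empty =>
    have hdirac : poissonMeasure 0 = Measure.dirac 0 := by
      refine Measure.ext_of_singleton fun n => ?_
      rcases n with _ | n <;> simp [poissonMeasure_singleton]
    rw [Finset.sum_empty, Finset.sum_empty, hdirac]
    exact hasLaw_dirac_of_ae_eq (.of_forall fun _ => rfl)
  | insert i s hi ih =>
    rw [Finset.sum_insert hi, Finset.sum_insert hi]
    exact (hindep.indepFun_finsetSum_of_notMem₀ (fun j => (hX j).aemeasurable) hi).symm
      |>.hasLaw_add_poissonMeasure (hX i) ih

end Poisson

section PoissonPi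

variable {ι : Type*} [Fintype ι]

/-- The joint law of independent Poisson counts with means `m j`. -/
noncomputable abbrev poissonPi (m : ι → ℝ≥0) : Measure (ι → ℕ) :=
  Measure.pi fun j => poissonMeasure (m j)

/-- The share of the `i`-th count in the total. It is `0` when all counts vanish, so that events
with zero total do not contribute to the moments of the proportions. -/
noncomputable def proportion (γ : ι → ℕ) (i : ι) : ℝ :=
  (γ i : ℝ) / ((∑ j, γ j : ℕ) : ℝ)

lemma proportion_nonneg (γ : ι → ℕ) (i : ι) : 0 ≤ proportion γ i := by
  unfold proportion
  positivity

lemma proportion_le_one (γ : ι → ℕ) (i : ι) : proportion γ i ≤ 1 :=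
  div_le_one_of_le₀ (mod_cast Finset.single_le_sum_of_canonicallyOrdered (Finset.mem_univ i))
    (by positivity)

lemma abs_proportion_le_one (γ : ι → ℕ) (i : ι) : |proportion γ i| ≤ 1 := by
  rw [abs_of_nonneg (proportion_nonneg γ i)]
  exact proportion_le_one γ i

variable (m : ι → ℝ≥0)

lemma hasLaw_sum_poissonPi :
    HasLaw (fun γ : ι → ℕ => ∑ j, γ j) (poissonMeasure (∑ j, m j)) (poissonPi m) := by
  have hsum := hasLaw_sum_poissonMeasure (P := poissonPi m) (X := fun j γ => γ j)
    (iIndepFun_pi (X := fun _ => id) fun _ => aemeasurable_id)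
    (fun j => (measurePreserving_eval (fun j => poissonMeasure (m j)) j).hasLaw) Finset.univ
  convert hsum using 1
  ext γ
  simp

lemma mul_poissonPi_singleton_add_single [DecidableEq ι] (i : ι) (γ : ι → ℕ) :
    ((γ i + 1 : ℕ) : ℝ≥0∞) * poissonPi m {γ + Pi.single i 1} = m i * poissonPi m {γ} := by
  rw [Measure.pi_singleton, Measure.pi_singleton,
    ← Finset.mul_prod_erase Finset.univ _ (Finset.mem_univ i),
    ← Finset.mul_prod_erase Finset.univ (fun j => poissonMeasure (m j) {γ j}) (Finset.mem_univ i),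
    ← mul_assoc, ← mul_assoc, ← natCast_succ_mul_poissonMeasure_singleton]
  congr 1
  · simp
  · refine Finset.prod_congr rfl fun j hj => ?_
    simp [Finset.ne_of_mem_erase hj]

lemma integral_apply_mul_poissonPi [DecidableEq ι] (i : ι) (g : (ι → ℕ) → ℝ) :
    ∫ γ, (γ i : ℝ) * g γ ∂(poissonPi m)
      = m i * ∫ γ, g (γ + Pi.single i 1) ∂(poissonPi m) := by
  have h := integral_smul_eq_smul_integral_comp_of_injective (μ := poissonPi m)
    (w := fun γ => (γ i : ℝ≥0)) (add_left_injective (Pi.single i 1))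
    (fun γ hγ => by
      rw [Nat.cast_eq_zero]
      by_contra h0
      refine hγ ⟨γ - Pi.single i 1, tsub_add_cancel_of_le fun j => ?_⟩
      rcases eq_or_ne j i with rfl | hj
      · simpa using Nat.one_le_iff_ne_zero.mpr h0
      · simp [hj])
    (fun γ => by simpa using mul_poissonPi_singleton_add_single m i γ) g
  simpa only [NNReal.smul_def, smul_eq_mul, NNReal.coe_natCast] using h

lemma integral_apply_mul_comp_sum_poissonPi (i : ι) (h : ℕ → ℝ) :
    ∫ γ, (γ i : ℝ) * h (∑ j, γ j) ∂(poissonPi m)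
      = m i * ∫ n, h (n + 1) ∂(poissonMeasure (∑ j, m j)) := by
  classical
  rw [integral_apply_mul_poissonPi m i fun γ => h (∑ j, γ j),
    ← (hasLaw_sum_poissonPi m).integral_comp .of_discrete]
  simp [Finset.sum_add_distrib]

lemma integral_apply_mul_apply_sub_mul_comp_sum_poissonPi [DecidableEq ι] (i j : ι) (h : ℕ → ℝ) :
    ∫ γ, (γ i : ℝ) * (((γ j : ℝ) - if i = j then 1 else 0) * h (∑ k, γ k)) ∂(poissonPi m)
      = m i * m j * ∫ n, h (n + 2) ∂(poissonMeasure (∑ k, m k)) := by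
  have hshift (γ : ι → ℕ) :
      (((γ + Pi.single i 1 : ι → ℕ) j : ℝ) - if i = j then 1 else 0) = γ j := by
    rcases eq_or_ne i j with rfl | hij <;> simp [*, Ne.symm]
  rw [integral_apply_mul_poissonPi m i fun γ =>
    ((γ j : ℝ) - if i = j then 1 else 0) * h (∑ k, γ k)]
  simp only [hshift]
  simp only [Pi.add_apply, Finset.sum_add_distrib, Finset.sum_pi_single', Finset.mem_univ, if_true]
  rw [integral_apply_mul_comp_sum_poissonPi m j fun n => h (n + 1), mul_assoc]

lemma sum_mul_integral_proportion (i : ι) :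
    (∑ j, m j : ℝ≥0) * ∫ γ, proportion γ i ∂(poissonPi m)
      = m i * (1 - exp (-(∑ j, m j : ℝ≥0))) := by
  simp only [proportion, div_eq_mul_inv]
  rw [integral_apply_mul_comp_sum_poissonPi m i fun n => (n : ℝ)⁻¹,
    ← mul_integral_inv_add_one_poissonMeasure]
  push_cast
  ring

lemma sum_sq_mul_integral_proportion_mul_proportion [DecidableEq ι] (i j : ι) :
    (∑ k, m k : ℝ≥0) ^ 2 * ∫ γ, proportion γ i * proportion γ j ∂(poissonPi m)
      = m i * m j * (1 - exp (-(∑ k, m k : ℝ≥0)))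
        + m i * ((if i = j then 1 else 0) * (∑ k, m k : ℝ≥0) - m j)
          * ∫ n : ℕ, (n : ℝ)⁻¹ ∂(poissonMeasure (∑ k, m k)) := by
  let h : ℕ → ℝ := fun n => ((n : ℝ) ^ 2)⁻¹
  have hint_proportion : Integrable (fun γ => proportion γ i * proportion γ j) (poissonPi m) :=
    integrable_of_countable_of_bound (C := 1) fun γ => by
      rw [norm_mul]
      exact mul_le_one₀ (abs_proportion_le_one γ i) (norm_nonneg _) (abs_proportion_le_one γ j)
  have hint_diag : Integrable (fun γ => (γ i : ℝ) * h (∑ k, γ k)) (poissonPi m) :=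
    integrable_of_countable_of_bound (C := 1) fun γ => by
      have hproportion : (γ i : ℝ) * h (∑ k, γ k)
          = proportion γ i * ((∑ k, γ k : ℕ) : ℝ)⁻¹ := by
        simp only [proportion, h]
        ring
      rw [hproportion, norm_mul, norm_inv, norm_natCast]
      exact mul_le_one₀ (abs_proportion_le_one γ i) (by positivity) (Nat.cast_inv_le_one _)
  have hfactorial : ∫ γ, (proportion γ i * proportion γ j
        - (if i = j then 1 else 0) * ((γ i : ℝ) * h (∑ k, γ k))) ∂(poissonPi m)
      = m i * m j * ∫ n, h (n + 2) ∂(poissonMeasure (∑ k, m k)) := by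
    rw [← integral_apply_mul_apply_sub_mul_comp_sum_poissonPi]
    congr 1 with γ
    simp only [proportion, h]
    ring
  rw [integral_sub hint_proportion (hint_diag.const_mul _), integral_const_mul,
    integral_apply_mul_comp_sum_poissonPi] at hfactorial
  linear_combination (∑ k, m k : ℝ≥0) ^ 2 * hfactorial
    + m i * m j * sq_mul_integral_inv_sq_add_two_poissonMeasure (∑ k, m k)
    + m i * (if i = j then 1 else 0) * (∑ k, m k : ℝ≥0)
      * mul_integral_inv_sq_add_one_poissonMeasure (∑ k, m k)

end PoissonPi

section PPU

variable {V : ℕ} {F : Fin V → ℝ} {ϖ : ℝ}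

lemma sum_toNNReal_mul_of_mem_stdSimplex (hF : F ∈ stdSimplex ℝ (Fin V)) (hϖ : 0 ≤ ϖ) :
    ∑ j, (ϖ * F j).toNNReal = ϖ.toNNReal := by
  rw [← toNNReal_sum_of_nonneg fun j _ => mul_nonneg hϖ (hF.1 j), ← Finset.mul_sum, hF.2, mul_one]

lemma poissonPi_real_total_pos (hF : F ∈ stdSimplex ℝ (Fin V)) (hϖ : 0 ≤ ϖ) :
    (poissonPi fun j => (ϖ * F j).toNNReal).real {γ | 0 < ∑ j, γ j} = 1 - exp (-ϖ) := by
  rw [(hasLaw_sum_poissonPi _).measureReal_eq (p := fun n => 0 < n) .of_discrete,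
    sum_toNNReal_mul_of_mem_stdSimplex hF hϖ, poissonMeasure_real_setOf_pos, coe_toNNReal _ hϖ]

lemma isProbabilityMeasure_ppu (hF : F ∈ stdSimplex ℝ (Fin V)) (hϖ : 0 < ϖ) :
    IsProbabilityMeasure (ppu V ϖ F) := by
  have hpos : (poissonPi fun j => (ϖ * F j).toNNReal).real {γ | 0 < ∑ j, γ j} ≠ 0 := by
    rw [poissonPi_real_total_pos hF hϖ.le]
    exact one_sub_exp_neg_ne_zero hϖ
  have := cond_isProbabilityMeasure (ENNReal.toReal_ne_zero.mp hpos).1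
  exact Measure.isProbabilityMeasure_map .of_discrete

lemma integral_ppu (hF : F ∈ stdSimplex ℝ (Fin V)) (hϖ : 0 ≤ ϖ) {f : (Fin V → ℝ) → ℝ}
    (hf : Measurable f) (h0 : f 0 = 0) :
    ∫ x, f x ∂(ppu V ϖ F)
      = (1 - exp (-ϖ))⁻¹ * ∫ γ, f (proportion γ) ∂(poissonPi fun j => (ϖ * F j).toNNReal) := by
  have hvanish (γ : Fin V → ℕ) (hγ : γ ∉ {γ | 0 < ∑ j, γ j}) : f (proportion γ) = 0 := by
    have hzero : proportion γ = 0 := by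
      ext i
      simp [proportion, show ∑ j, γ j = 0 by simpa using hγ]
    rw [hzero, h0]
  rw [ppu, integral_map .of_discrete hf.aestronglyMeasurable, ProbabilityTheory.cond,
    integral_smul_measure, ENNReal.toReal_inv, ← measureReal_def, poissonPi_real_total_pos hF hϖ,
    smul_eq_mul]
  exact congrArg _ (setIntegral_eq_integral_of_forall_compl_eq_zero hvanish)

lemma memLp_apply_ppu (i : Fin V) (p : ℝ≥0∞) : MemLp (fun x => x i) p (ppu V ϖ F) := by
  have hmeas : Measurable fun x : Fin V → ℝ => x i := measurable_pi_apply i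
  rw [ppu, memLp_map_measure_iff hmeas.aestronglyMeasurable .of_discrete]
  exact .of_bound .of_discrete 1 (.of_forall fun γ => abs_proportion_le_one γ i)

lemma integral_apply_ppu (hF : F ∈ stdSimplex ℝ (Fin V)) (hϖ : 0 < ϖ) (i : Fin V) :
    ∫ x, x i ∂(ppu V ϖ F) = F i := by
  have hproportion := sum_mul_integral_proportion (fun j => (ϖ * F j).toNNReal) i
  rw [sum_toNNReal_mul_of_mem_stdSimplex hF hϖ.le, coe_toNNReal _ hϖ.le,
    coe_toNNReal _ (mul_nonneg hϖ.le (hF.1 i))] at hproportion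
  rw [integral_ppu hF hϖ.le (measurable_pi_apply i) rfl,
    inv_mul_eq_iff_eq_mul₀ (one_sub_exp_neg_ne_zero hϖ)]
  apply mul_left_cancel₀ hϖ.ne'
  rw [hproportion]
  ring

lemma integral_apply_mul_apply_ppu (hF : F ∈ stdSimplex ℝ (Fin V)) (hϖ : 0 < ϖ) (i j : Fin V) :
    ∫ x, x i * x j ∂(ppu V ϖ F)
      = F i * F j + F i * ((if i = j then 1 else 0) - F j)
        * ((∫ n : ℕ, (n : ℝ)⁻¹ ∂(poissonMeasure ϖ.toNNReal)) / (1 - exp (-ϖ))) := by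
  have hproportion := sum_sq_mul_integral_proportion_mul_proportion
    (fun k => (ϖ * F k).toNNReal) i j
  rw [sum_toNNReal_mul_of_mem_stdSimplex hF hϖ.le, coe_toNNReal _ hϖ.le,
    coe_toNNReal _ (mul_nonneg hϖ.le (hF.1 i)),
    coe_toNNReal _ (mul_nonneg hϖ.le (hF.1 j))] at hproportion
  rw [integral_ppu hF hϖ.le (f := fun x => x i * x j) (by fun_prop) (zero_mul _),
    inv_mul_eq_iff_eq_mul₀ (one_sub_exp_neg_ne_zero hϖ), mul_add, mul_left_comm _ (_ * _) (_ / _),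
    mul_div_cancel₀ _ (one_sub_exp_neg_ne_zero hϖ)]
  apply mul_left_cancel₀ (pow_ne_zero 2 hϖ.ne')
  linear_combination hproportion

lemma covariance_ppu (hF : F ∈ stdSimplex ℝ (Fin V)) (hϖ : 0 < ϖ) (i j : Fin V) :
    cov[fun x => x i, fun x => x j; ppu V ϖ F]
      = F i * ((if i = j then 1 else 0) - F j)
        * ((∫ n : ℕ, (n : ℝ)⁻¹ ∂(poissonMeasure ϖ.toNNReal)) / (1 - exp (-ϖ))) := by
  have := isProbabilityMeasure_ppu hF hϖ
  rw [covariance_eq_sub (memLp_apply_ppu i 2) (memLp_apply_ppu j 2), integral_apply_ppu hF hϖ,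
    integral_apply_ppu hF hϖ]
  simp only [Pi.mul_apply]
  rw [integral_apply_mul_apply_ppu hF hϖ, add_sub_cancel_left]

lemma tendsto_mul_covariance_ppu (hF : F ∈ stdSimplex ℝ (Fin V)) (i j : Fin V) :
    Tendsto (fun ϖ : ℝ => ϖ * cov[fun x => x i, fun x => x j; ppu V ϖ F]) atTop
      (𝓝 (F i * ((if i = j then 1 else 0) - F j))) := by
  have hinv := tendsto_mul_integral_inv_poissonMeasure.comp tendsto_real_toNNReal_atTop
  have hlim := (hinv.div tendsto_one_sub_exp_neg_atTop one_ne_zero).const_mul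
    (F i * ((if i = j then 1 else 0) - F j))
  rw [div_one, mul_one] at hlim
  refine hlim.congr' ?_
  filter_upwards [eventually_gt_atTop 0] with ϖ hϖ
  rw [covariance_ppu hF hϖ]
  simp only [Function.comp_apply, Pi.div_apply, coe_toNNReal _ hϖ.le]
  ring

end PPU

/-- **Asymptotic moments of the Poisson Pólya urn.** If `x_ϖ ~ PPU(ϖ, F)` with `F` a strictly
positive probability vector, then as `ϖ → ∞`:
(i) `E(x_i) → F_i`; (ii) `ϖ · Var(x_i) → F_i (1 − F_i)`; (iii) `ϖ · Cov(x_i, x_j) → −F_i F_j`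
for `i ≠ j`. -/
theorem ppu_asymptotic_moments
    (V : ℕ) (hV : 1 ≤ V) (F : Fin V → ℝ) (hFpos : ∀ j, 0 < F j) (hFsum : ∑ j, F j = 1) :
    (∀ i, Tendsto (fun ϖ : ℝ => ∫ x, x i ∂(ppu V ϖ F)) atTop (nhds (F i)))
    ∧
    (∀ i, Tendsto
      (fun ϖ : ℝ => ϖ * ∫ x, (x i - ∫ y, y i ∂(ppu V ϖ F)) ^ 2 ∂(ppu V ϖ F))
      atTop (nhds (F i * (1 - F i))))
    ∧
    (∀ i j, i ≠ j → Tendsto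
      (fun ϖ : ℝ =>
        ϖ * ∫ x, (x i - ∫ y, y i ∂(ppu V ϖ F)) * (x j - ∫ y, y j ∂(ppu V ϖ F)) ∂(ppu V ϖ F))
      atTop (nhds (-(F i * F j)))) := by
  have hF : F ∈ stdSimplex ℝ (Fin V) := ⟨fun j => (hFpos j).le, hFsum⟩
  refine ⟨fun i => ?_, fun i => ?_, fun i j hij => ?_⟩
  · refine tendsto_const_nhds.congr' ?_
    filter_upwards [eventually_gt_atTop 0] with ϖ hϖ
    rw [integral_apply_ppu hF hϖ]
  · simpa [covariance, sq] using tendsto_mul_covariance_ppu hF i i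
  · simpa [covariance, hij] using tendsto_mul_covariance_ppu hF i j
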